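/- arXiv:1903.10386 — 2 statements merged into one kernel-verified Lean document; each statement's English description precedes it below -/
import Mathlib

section
/- Let G be a bidirected graph with vertices 1,…,t and let 𝒜 and ℬ be complex matrix representations of G of the same dimension (n₁,…,n_t). Then 𝒜 and ℬ are isomorphic if and only if there exist two families of invertible matrices P_i ∈ GL(n_i,ℂ) and R_i ∈ GL(n_i,ℂ) (i = 1,…,t) such that: for each directed edge β: i→j, P_j ℬ_β = 𝒜_β P_i and R_i ℬ_βᵀ = 𝒜_βᵀ R_j; for each undirected edge α: i—j, R_i ℬ_αᵀ = 𝒜_αᵀ P_j and R_j ℬ_α = 𝒜_α P_i; and for each bidirected edge γ: i↔j, P_i ℬ_γᵀ = 𝒜_γᵀ R_j and P_j ℬ_γ = 𝒜_γ R_i. -/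
/-- A bidirected graph with vertex set `Fin t`: it has finite sets of undirected
edges, directed edges, and bidirected edges (loops and multiple edges allowed);
each edge has a source and a target vertex. -/
structure BidirGraph (t : ℕ) where
  UEdge : Type
  DEdge : Type
  BEdge : Type
  [instFintypeU : Fintype UEdge]
  [instFintypeD : Fintype DEdge]
  [instFintypeB : Fintype BEdge]
  usrc : UEdge → Fin t
  utgt : UEdge → Fin t
  dsrc : DEdge → Fin t
  dtgt : DEdge → Fin t
  bsrc : BEdge → Fin t
  btgt : BEdge → Fin t

attribute [instance] BidirGraph.instFintypeU BidirGraph.instFintypeD BidirGraph.instFintypeB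

/-- A complex matrix representation of a bidirected graph `G` of dimension `n`:
to each edge `e : i ⟶ j` (undirected, directed or bidirected) it assigns a
matrix in `ℂ^{n j × n i}`. -/
structure BidirRep {t : ℕ} (G : BidirGraph t) (n : Fin t → ℕ) where
  u : ∀ e : G.UEdge, Matrix (Fin (n (G.utgt e))) (Fin (n (G.usrc e))) ℂ
  d : ∀ e : G.DEdge, Matrix (Fin (n (G.dtgt e))) (Fin (n (G.dsrc e))) ℂ
  b : ∀ e : G.BEdge, Matrix (Fin (n (G.btgt e))) (Fin (n (G.bsrc e))) ℂ

/-- A family `S` of invertible matrices is an isomorphism `ℬ → 𝒜` of representations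
of a bidirected graph if `ℬ_α = S_jᵀ * 𝒜_α * S_i` for each undirected edge `α : i — j`,
`S_j * ℬ_β = 𝒜_β * S_i` for each directed edge `β : i ⟶ j`, and
`𝒜_γ = S_j * ℬ_γ * S_iᵀ` for each bidirected edge `γ : i ↔ j`. -/
def IsBidirRepIso {t : ℕ} {G : BidirGraph t} {n : Fin t → ℕ}
    (S : ∀ i : Fin t, Matrix (Fin (n i)) (Fin (n i)) ℂ) (ℬ 𝒜 : BidirRep G n) : Prop :=
  (∀ i, IsUnit (S i)) ∧
  (∀ e : G.UEdge, ℬ.u e = (S (G.utgt e)).transpose * 𝒜.u e * S (G.usrc e)) ∧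
  (∀ e : G.DEdge, S (G.dtgt e) * ℬ.d e = 𝒜.d e * S (G.dsrc e)) ∧
  (∀ e : G.BEdge, 𝒜.b e = S (G.btgt e) * ℬ.b e * (S (G.bsrc e)).transpose)

/-!
Put `P i` at the vertex `i` of the doubled quiver and `R i` at `i*`. An isomorphism of the
bidirected representations is precisely a doubled isomorphism with `R i = (P i)ᵀ⁻¹`, so the task is
to correct an arbitrary pair `(P, R)` to one with this property. The products `M i = (R i)ᵀ * P i`
at the `i`, with their transposes at the `i*`, intertwine all the arrows. Let `F i` be the inverse
square root of `M i` in a fixed branch of the square root. It is compatible with the arrows as well,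
and `S i = P i * F i` satisfies `(S i)ᵀ⁻¹ = R i * (F i)ᵀ`.

That the inverse square root in a fixed branch is compatible with intertwiners is Sylvester's
theorem: if `Y` and `Z` are such roots of `M` and `N`, then `M * B = B * N` makes
`D = Y * B - B * Z` satisfy `Y * D = D * (-Z)`, and `Y`, `-Z` have no common eigenvalue.
-/

open Matrix Polynomial

section Intertwining

variable {R m n : Type*} [CommSemiring R] [Fintype m] [DecidableEq m] [Fintype n] [DecidableEq n]
  {M : Matrix m m R} {N : Matrix n n R} {B : Matrix m n R}

theorem pow_mul_eq_mul_pow_of_intertwine (h : M * B = B * N) (k : ℕ) :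
    M ^ k * B = B * N ^ k := by
  induction k with
  | zero => simp
  | succ k ih =>
    rw [pow_succ, Matrix.mul_assoc, h, ← Matrix.mul_assoc, ih, Matrix.mul_assoc, ← pow_succ]

theorem aeval_mul_eq_mul_aeval_of_intertwine (h : M * B = B * N) (f : R[X]) :
    aeval M f * B = B * aeval N f := by
  induction f using Polynomial.induction_on' with
  | add p q hp hq => simp only [map_add, Matrix.add_mul, Matrix.mul_add, hp, hq]
  | monomial k c =>
    simp only [aeval_monomial, ← Algebra.smul_def, Matrix.smul_mul, Matrix.mul_smul,
      pow_mul_eq_mul_pow_of_intertwine h]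

end Intertwining

section PolynomialSqrt

variable {K : Type*} [Field K] {q : K[X]}

theorem exists_dvd_pow_of_isRoot (hq : q.Splits) (hq₀ : q ≠ 0) {e : K[X]}
    (h : ∀ z, q.IsRoot z → e.IsRoot z) : ∃ k, q ∣ e ^ k := by
  classical
  obtain rfl | he := eq_or_ne e 0
  · exact ⟨1, by simp⟩
  refine ⟨q.roots.card, hq.dvd_of_roots_le_roots hq₀ (Multiset.le_iff_count.2 fun z => ?_)⟩
  rw [roots_pow, Multiset.count_nsmul]
  by_cases hz : z ∈ q.roots
  · have : 0 < e.roots.count z :=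
      Multiset.count_pos.2 ((mem_roots he).2 (h z (isRoot_of_mem_roots hz)))
    exact (Multiset.count_le_card z _).trans (Nat.le_mul_of_pos_right _ this)
  · simp [Multiset.count_eq_zero_of_notMem hz]

-- Newton iteration in `K[X] ⧸ (q)`: `f₀` is a simple root of `X * Y ^ 2 - 1` modulo nilpotents.
theorem exists_dvd_X_mul_sq_sub_one [NeZero (2 : K)] (hq : q.Splits) (hq₀ : q ≠ 0) {f₀ : K[X]}
    (h : ∀ z, q.IsRoot z → z * f₀.eval z ^ 2 = 1) :
    ∃ f, q ∣ X * f ^ 2 - 1 ∧ ∀ z, q.IsRoot z → f.eval z = f₀.eval z := by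
  let π := Ideal.Quotient.mk (Ideal.span {q})
  have π_eq_zero (g : K[X]) : π g = 0 ↔ q ∣ g := Ideal.Quotient.eq_zero_iff_dvd q g
  let P : K[X][X] := C X * X ^ 2 - 1
  have aeval_P (g : K[X]) : aeval (π g) P = π (X * g ^ 2 - 1) := by
    simp [P, π, Ideal.Quotient.algebraMap_eq]
  have aeval_derivative_P : aeval (π f₀) (derivative P) = π (2 * (X * f₀)) := by
    simp [P, π, Ideal.Quotient.algebraMap_eq, mul_left_comm, one_add_one_eq_two]
  have nilpotent : IsNilpotent (π (X * f₀ ^ 2 - 1)) := by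
    obtain ⟨k, hk⟩ := exists_dvd_pow_of_isRoot hq hq₀ (e := X * f₀ ^ 2 - 1) fun z hz => by
      simp [h z hz]
    exact ⟨k, by rwa [← map_pow, π_eq_zero]⟩
  have isUnit_two : IsUnit (π 2) := by
    have : IsUnit (C (2 : K)) := isUnit_C.2 (isUnit_iff_ne_zero.2 two_ne_zero)
    exact this.map π
  have isUnit_X_mul : IsUnit (π (X * f₀)) := by
    have : π (X * f₀) * π f₀ = π (X * f₀ ^ 2 - 1) + 1 := by
      rw [← map_mul, ← map_one π, ← map_add]; ring_nf
    exact isUnit_of_mul_isUnit_left (this ▸ nilpotent.isUnit_add_one)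
  obtain ⟨r, ⟨⟨k, hk⟩, hr⟩, -⟩ := existsUnique_nilpotent_sub_and_aeval_eq_zero
    (x := π f₀) (P := P) (aeval_P f₀ ▸ nilpotent)
    (by rw [aeval_derivative_P, map_mul]; exact isUnit_two.mul isUnit_X_mul)
  obtain ⟨f, rfl⟩ := Ideal.Quotient.mk_surjective r
  refine ⟨f, (π_eq_zero _).1 (aeval_P f ▸ hr), fun z hz => ?_⟩
  have dvd_pow : q ∣ (f₀ - f) ^ k := (π_eq_zero _).1 (by rwa [map_pow, map_sub])
  have : (f₀.eval z - f.eval z) ^ k = 0 := by simpa using hz.dvd dvd_pow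
  exact (sub_eq_zero.1 (eq_zero_of_pow_eq_zero this)).symm

theorem exists_dvd_X_mul_sq_sub_one_of_forall_isRoot [NeZero (2 : K)] (hq : q.Splits)
    (hq₀ : q ≠ 0) {H : Set K} (h : ∀ z, q.IsRoot z → ∃ c ∈ H, z * c ^ 2 = 1) :
    ∃ f, q ∣ X * f ^ 2 - 1 ∧ ∀ z, q.IsRoot z → f.eval z ∈ H := by
  classical
  choose! c hcH hc using h
  let f₀ := Lagrange.interpolate q.roots.toFinset id c
  have eval_f₀ (z : K) (hz : q.IsRoot z) : f₀.eval z = c z :=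
    Lagrange.eval_interpolate_at_node (s := q.roots.toFinset) (v := id) c (Set.injOn_id _)
      (by simpa [hq₀] using hz)
  obtain ⟨f, hf, eval_f⟩ := exists_dvd_X_mul_sq_sub_one hq hq₀ (f₀ := f₀) fun z hz => by
    rw [eval_f₀ z hz, hc z hz]
  exact ⟨f, hf, fun z hz => by rw [eval_f z hz, eval_f₀ z hz]; exact hcH z hz⟩

end PolynomialSqrt

section InvSqrt

variable {K : Type*} [Field K] {m n : Type*} [Fintype m] [DecidableEq m] [Fintype n]
  [DecidableEq n]

theorem eq_zero_of_intertwine_of_disjoint_spectrum [IsAlgClosed K] {M : Matrix m m K}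
    {N : Matrix n n K} {B : Matrix m n K} (hMN : Disjoint (spectrum K M) (spectrum K N))
    (h : M * B = B * N) : B = 0 := by
  obtain ⟨u, v, huv⟩ : IsCoprime M.charpoly N.charpoly := by
    refine (isCoprime_iff_aeval_ne_zero_of_isAlgClosed K K _ _).2 fun z => ?_
    by_contra! hz
    rw [coe_aeval_eq_eval] at hz
    exact Set.disjoint_left.1 hMN (mem_spectrum_of_isRoot_charpoly hz.1)
      (mem_spectrum_of_isRoot_charpoly hz.2)
  calc
    B = B * aeval N (u * M.charpoly + v * N.charpoly) := by simp [huv]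
    _ = B * aeval N (u * M.charpoly) := by simp [aeval_self_charpoly]
    _ = aeval M (u * M.charpoly) * B := (aeval_mul_eq_mul_aeval_of_intertwine h _).symm
    _ = 0 := by simp [aeval_self_charpoly]

-- `H` generalizes the half-plane that fixes a branch of the complex square root.
theorem exists_sqrt_branch (K : Type*) [Field K] [IsAlgClosed K] [NeZero (2 : K)] :
    ∃ H : Set K, (∀ z ∈ H, -z ∉ H) ∧ ∀ z ≠ 0, ∃ c ∈ H, c ^ 2 = z := by
  choose σ hσ using fun z : K => IsAlgClosed.exists_pow_nat_eq z two_pos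
  refine ⟨{z | z ≠ 0 ∧ σ (z ^ 2) = z}, fun z hz hz' => hz.1 ?_, fun z hz => ⟨σ z, ⟨?_, ?_⟩, hσ z⟩⟩
  · have : z = -z := by rw [← hz'.2, neg_sq, hz.2]
    exact (mul_eq_zero.1 (by linear_combination this : 2 * z = 0)).resolve_left two_ne_zero
  · intro h0
    exact hz (by rw [← hσ z, h0, zero_pow two_ne_zero])
  · rw [hσ]

/-- `Y` is the inverse square root of `M` belonging to the branch `H` of the square root. The
branch is encoded by the set `H` of its values, so that it selects `Y` by the condition that all
eigenvalues of `Y` lie in `H`; when `H` and `-H` are disjoint, this makes the choice of `Y` natural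
in `M`. -/
structure IsInvSqrt (H : Set K) (M Y : Matrix m m K) : Prop where
  mul_sq : M * Y ^ 2 = 1
  spectrum_subset : spectrum K Y ⊆ H

theorem exists_isInvSqrt [IsAlgClosed K] [NeZero (2 : K)] {H : Set K}
    (hH : ∀ z ≠ 0, ∃ c ∈ H, c ^ 2 = z) {M : Matrix m m K} (hM : IsUnit M) :
    ∃ Y, IsInvSqrt H M Y := by
  have exists_inv_sqrt (z : K) (hz : M.charpoly.IsRoot z) : ∃ c ∈ H, z * c ^ 2 = 1 := by
    have hz₀ : z ≠ 0 :=
      spectrum.ne_zero_of_mem_of_unit (a := hM.unit) (mem_spectrum_of_isRoot_charpoly hz)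
    obtain ⟨c, hcH, hc⟩ := hH z⁻¹ (inv_ne_zero hz₀)
    exact ⟨c, hcH, by rw [hc, mul_inv_cancel₀ hz₀]⟩
  obtain ⟨f, ⟨g, hg⟩, hfH⟩ := exists_dvd_X_mul_sq_sub_one_of_forall_isRoot
    (IsAlgClosed.splits M.charpoly) M.charpoly_monic.ne_zero exists_inv_sqrt
  refine ⟨aeval M f, ?_, fun y hy => ?_⟩
  · simpa [aeval_self_charpoly, sub_eq_zero] using congrArg (aeval M) hg
  · cases subsingleton_or_nontrivial (Matrix m m K)
    · simp [spectrum.of_subsingleton] at hy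
    · rw [spectrum.map_polynomial_aeval_of_nonempty M f
        (spectrum.nonempty_of_isAlgClosed_of_finiteDimensional K M)] at hy
      obtain ⟨z, hz, rfl⟩ := hy
      exact hfH z (mem_spectrum_iff_isRoot_charpoly.1 hz)

namespace IsInvSqrt

variable {H : Set K} {M Y : Matrix m m K} {N Z : Matrix n n K}

theorem sq_mul (hY : IsInvSqrt H M Y) : Y ^ 2 * M = 1 :=
  _root_.mul_eq_one_comm.1 hY.mul_sq

theorem transpose (hY : IsInvSqrt H M Y) : IsInvSqrt H Mᵀ Yᵀ where
  mul_sq := by rw [← transpose_pow, ← transpose_mul, hY.sq_mul, transpose_one]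
  spectrum_subset z hz := hY.spectrum_subset <| by
    rwa [mem_spectrum_iff_isRoot_charpoly, ← charpoly_transpose,
      ← mem_spectrum_iff_isRoot_charpoly]

theorem intertwine [IsAlgClosed K] (hH : ∀ z ∈ H, -z ∉ H) (hY : IsInvSqrt H M Y)
    (hZ : IsInvSqrt H N Z) {B : Matrix m n K} (h : M * B = B * N) : Y * B = B * Z := by
  have sq_intertwine : Y ^ 2 * B = B * Z ^ 2 := calc
    Y ^ 2 * B = Y ^ 2 * (B * N) * Z ^ 2 := by
      rw [Matrix.mul_assoc, Matrix.mul_assoc, hZ.mul_sq, Matrix.mul_one]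
    _ = B * Z ^ 2 := by rw [← h, ← Matrix.mul_assoc, hY.sq_mul, Matrix.one_mul]
  have hdisj : Disjoint (spectrum K Y) (spectrum K (-Z)) := by
    rw [← spectrum.neg_eq, Set.disjoint_left]
    exact fun z hzY hzZ => hH z (hY.spectrum_subset hzY) (hZ.spectrum_subset hzZ)
  have : Y * (Y * B - B * Z) = (Y * B - B * Z) * -Z := by
    rw [Matrix.mul_sub, Matrix.mul_neg, Matrix.sub_mul, ← Matrix.mul_assoc, ← Matrix.mul_assoc,
      ← sq, sq_intertwine, Matrix.mul_assoc B, ← sq, neg_sub]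
  exact sub_eq_zero.1 (eq_zero_of_intertwine_of_disjoint_spectrum hdisj this)

theorem intertwine_mul [IsAlgClosed K] (hH : ∀ z ∈ H, -z ∉ H)
    {X X' F : Matrix n n K} {Y Y' G : Matrix m m K} {A B : Matrix m n K}
    (hF : IsInvSqrt H (X'ᵀ * X) F) (hG : IsInvSqrt H (Y'ᵀ * Y) G)
    (h : Y * B = A * X) (h' : X' * Bᵀ = Aᵀ * Y') : Y * G * B = A * (X * F) := by
  have hT : B * X'ᵀ = Y'ᵀ * A := by simpa using congrArg Matrix.transpose h'
  have hM : Y'ᵀ * Y * B = B * (X'ᵀ * X) := by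
    rw [Matrix.mul_assoc, h, ← Matrix.mul_assoc, ← hT, Matrix.mul_assoc]
  rw [Matrix.mul_assoc, hG.intertwine hH hF hM, ← Matrix.mul_assoc, h, Matrix.mul_assoc]

end IsInvSqrt

end InvSqrt

section Contragredient

variable {R l m n : Type*} [CommRing R] [Fintype m] [DecidableEq m] [Fintype n]

theorem eq_transpose_mul_mul_iff {A : Matrix m n R} {B : Matrix m l R} {S : Matrix m m R}
    (hS : IsUnit S) (C : Matrix n l R) : B = Sᵀ * A * C ↔ Sᵀ⁻¹ * B = A * C := by
  have := ((isUnit_transpose _).2 hS).invertible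
  rw [inv_mul_eq_iff_eq_mul_of_invertible, Matrix.mul_assoc]

theorem eq_mul_mul_transpose_iff {A : Matrix l m R} {B : Matrix n m R} {S : Matrix m m R}
    (hS : IsUnit S) (C : Matrix l n R) : A = C * B * Sᵀ ↔ C * B = A * Sᵀ⁻¹ := by
  have := ((isUnit_transpose _).2 hS).invertible
  rw [← mul_inv_eq_iff_eq_mul_of_invertible, eq_comm]

theorem inv_transpose_inv_transpose {S : Matrix m m R} (hS : IsUnit S) : Sᵀ⁻¹ᵀ⁻¹ = S := by
  rw [transpose_nonsing_inv, transpose_transpose,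
    nonsing_inv_nonsing_inv _ ((isUnit_iff_isUnit_det _).1 hS)]

theorem intertwine_contragredient [DecidableEq n] {A B : Matrix m n R} {X : Matrix n n R}
    {Y : Matrix m m R} (hX : IsUnit X) (hY : IsUnit Y) (h : Y * B = A * X) :
    Xᵀ⁻¹ * Bᵀ = Aᵀ * Yᵀ⁻¹ := by
  have hT : Bᵀ * Yᵀ = Xᵀ * Aᵀ := by rw [← transpose_mul, h, transpose_mul]
  have := ((isUnit_transpose _).2 hX).invertible
  have := ((isUnit_transpose _).2 hY).invertible
  rw [inv_mul_eq_iff_eq_mul_of_invertible, ← Matrix.mul_assoc, ← hT,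
    mul_inv_cancel_right_of_invertible]

theorem transpose_mul_mul_transpose_eq_one {P T F : Matrix m m R} (hF : Tᵀ * P * F ^ 2 = 1) :
    (P * F)ᵀ * (T * Fᵀ) = 1 := by
  have : F * (Tᵀ * P * F) = 1 := mul_eq_one_comm.1 (by rw [Matrix.mul_assoc, ← sq, hF])
  simpa [Matrix.mul_assoc] using congrArg Matrix.transpose this

end Contragredient

theorem bidir_rep_iso_iff_doubled_quiver_iso_general {K V U D B : Type*} [Field K] [IsAlgClosed K]
    [NeZero (2 : K)] {n : V → Type*} [∀ i, Fintype (n i)] [∀ i, DecidableEq (n i)]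
    {usrc utgt : U → V} {dsrc dtgt : D → V} {bsrc btgt : B → V}
    (𝒜u ℬu : ∀ e, Matrix (n (utgt e)) (n (usrc e)) K)
    (𝒜d ℬd : ∀ e, Matrix (n (dtgt e)) (n (dsrc e)) K)
    (𝒜b ℬb : ∀ e, Matrix (n (btgt e)) (n (bsrc e)) K) :
    (∃ S : ∀ i, Matrix (n i) (n i) K, (∀ i, IsUnit (S i)) ∧
      (∀ e, ℬu e = (S (utgt e))ᵀ * 𝒜u e * S (usrc e)) ∧
      (∀ e, S (dtgt e) * ℬd e = 𝒜d e * S (dsrc e)) ∧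
      (∀ e, 𝒜b e = S (btgt e) * ℬb e * (S (bsrc e))ᵀ)) ↔
    ∃ P R : ∀ i, Matrix (n i) (n i) K, (∀ i, IsUnit (P i)) ∧ (∀ i, IsUnit (R i)) ∧
      (∀ e, P (dtgt e) * ℬd e = 𝒜d e * P (dsrc e) ∧
        R (dsrc e) * (ℬd e)ᵀ = (𝒜d e)ᵀ * R (dtgt e)) ∧
      (∀ e, R (usrc e) * (ℬu e)ᵀ = (𝒜u e)ᵀ * P (utgt e) ∧
        R (utgt e) * ℬu e = 𝒜u e * P (usrc e)) ∧
      (∀ e, P (bsrc e) * (ℬb e)ᵀ = (𝒜b e)ᵀ * R (btgt e) ∧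
        P (btgt e) * ℬb e = 𝒜b e * R (bsrc e)) := by
  constructor
  · rintro ⟨S, hS, hu, hd, hb⟩
    have hT i : IsUnit (S i)ᵀ⁻¹ := isUnit_nonsing_inv_iff.2 ((isUnit_transpose _).2 (hS i))
    have hTT i : (S i)ᵀ⁻¹ᵀ⁻¹ = S i := inv_transpose_inv_transpose (hS i)
    have hu' e := (eq_transpose_mul_mul_iff (hS (utgt e)) _).1 (hu e)
    have hb' e := (eq_mul_mul_transpose_iff (hS (bsrc e)) _).1 (hb e)
    refine ⟨S, fun i => (S i)ᵀ⁻¹, hS, hT,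
      fun e => ⟨hd e, intertwine_contragredient (hS _) (hS _) (hd e)⟩,
      fun e => ⟨?_, hu' e⟩, fun e => ⟨?_, hb' e⟩⟩
    · simpa only [hTT] using intertwine_contragredient (hS _) (hT _) (hu' e)
    · simpa only [hTT] using intertwine_contragredient (hT _) (hS _) (hb' e)
  · rintro ⟨P, R, hP, hR, hd, hu, hb⟩
    obtain ⟨H, hH, hHsq⟩ := exists_sqrt_branch K
    choose F hF using fun i => exists_isInvSqrt (M := (R i)ᵀ * P i) hHsq
      (((isUnit_transpose _).2 (hR i)).mul (hP i))
    have hF' i : IsInvSqrt H ((P i)ᵀ * R i) (F i)ᵀ := by simpa using (hF i).transpose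
    have hSS i : (P i * F i)ᵀ * (R i * (F i)ᵀ) = 1 :=
      transpose_mul_mul_transpose_eq_one (hF i).mul_sq
    have hS i : IsUnit (P i * F i) := (isUnit_transpose _).1 (.of_mul_eq_one _ (hSS i))
    have hT i : (P i * F i)ᵀ⁻¹ = R i * (F i)ᵀ := inv_eq_right_inv (hSS i)
    refine ⟨fun i => P i * F i, hS, fun e => ?_, fun e => ?_, fun e => ?_⟩
    · rw [eq_transpose_mul_mul_iff (hS _), hT]
      exact (hF _).intertwine_mul hH (hF' _) (hu e).2 (hu e).1
    · exact (hF _).intertwine_mul hH (hF _) (hd e).1 (hd e).2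
    · rw [eq_mul_mul_transpose_iff (hS _), hT]
      exact (hF' _).intertwine_mul hH (hF _) (hb e).2 (hb e).1

/-- Roiter–Sergeichuk reduction: two complex matrix representations `𝒜`, `ℬ` of a
bidirected graph `G` are isomorphic if and only if the induced representations of the
associated quiver `G̲` are isomorphic, i.e. iff there exist families of invertible
matrices `P i`, `R i` such that for each directed edge `β : i → j`:
`P_j ℬ_β = 𝒜_β P_i` and `R_i ℬ_βᵀ = 𝒜_βᵀ R_j`; for each undirected edge `α : i — j`:
`R_i ℬ_αᵀ = 𝒜_αᵀ P_j` and `R_j ℬ_α = 𝒜_α P_i`; and for each bidirected edge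
`γ : i ↔ j`: `P_i ℬ_γᵀ = 𝒜_γᵀ R_j` and `P_j ℬ_γ = 𝒜_γ R_i`. -/
theorem bidir_rep_iso_iff_doubled_quiver_iso {t : ℕ} (G : BidirGraph t) (n : Fin t → ℕ)
    (𝒜 ℬ : BidirRep G n) :
    (∃ S, IsBidirRepIso S ℬ 𝒜) ↔
      ∃ P R : ∀ i : Fin t, Matrix (Fin (n i)) (Fin (n i)) ℂ,
        (∀ i, IsUnit (P i)) ∧ (∀ i, IsUnit (R i)) ∧
        (∀ e : G.DEdge,
          P (G.dtgt e) * ℬ.d e = 𝒜.d e * P (G.dsrc e) ∧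
          R (G.dsrc e) * (ℬ.d e).transpose = (𝒜.d e).transpose * R (G.dtgt e)) ∧
        (∀ e : G.UEdge,
          R (G.usrc e) * (ℬ.u e).transpose = (𝒜.u e).transpose * P (G.utgt e) ∧
          R (G.utgt e) * ℬ.u e = 𝒜.u e * P (G.usrc e)) ∧
        (∀ e : G.BEdge,
          P (G.bsrc e) * (ℬ.b e).transpose = (𝒜.b e).transpose * R (G.btgt e) ∧
          P (G.btgt e) * ℬ.b e = 𝒜.b e * R (G.bsrc e)) := by
  exact bidir_rep_iso_iff_doubled_quiver_iso_general (n := fun i => Fin (n i))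
    𝒜.u ℬ.u 𝒜.d ℬ.d 𝒜.b ℬ.b
end

section
/- For every nonsingular complex matrix M ∈ ℂ^{n×n} there exists a polynomial f ∈ ℂ[x] such that f(M)² = M; that is, every invertible complex matrix has a square root that is a polynomial in the matrix. -/
/-!
Let `a` be an element of an algebra over a field whose minimal polynomial `p` splits, and let `P`
be a polynomial. Interpolating preimages under `P` of the roots of `p` gives a polynomial `g` such
that `P(g) - X` vanishes at every root of `p`, so that `P(g) ≡ X` up to nilpotents modulo `p`.
If `P'` does not vanish at the chosen preimages, then `P'(g)` is a unit modulo `p`, and Newton's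
iteration corrects `g` to an exact solution `f` of `P(f) ≡ X` modulo `p`, that is, `P(f(a)) = a`.
For `P = X ^ k` the derivative condition holds as soon as `k` and all roots of `p` are nonzero.
-/

open Polynomial

section Newton

variable {R S : Type*} [CommRing R] [CommRing S] [Algebra R S]

theorem exists_aeval_eq_of_isNilpotent_sub {P : R[X]} {x b : S}
    (hnil : IsNilpotent (aeval x P - b)) (hunit : IsUnit (aeval x (derivative P))) :
    ∃ r, aeval r P = b := by
  obtain ⟨r, ⟨-, hr⟩, -⟩ := existsUnique_nilpotent_sub_and_aeval_eq_zero
    (P := P.map (algebraMap R S) - C b) (x := x) (by simpa using hnil)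
    (by simpa [derivative_map] using hunit)
  exact ⟨r, by simpa [sub_eq_zero] using hr⟩

theorem exists_dvd_comp_sub_of_dvd_pow {p P g q : R[X]} {m : ℕ}
    (hdvd : p ∣ (P.comp g - q) ^ m) (hcop : IsCoprime p ((derivative P).comp g)) :
    ∃ f, p ∣ P.comp f - q := by
  have aeval_mk (Q f : R[X]) : aeval (AdjoinRoot.mk p f) Q = AdjoinRoot.mk p (Q.comp f) := by
    rw [comp_eq_aeval]
    exact aeval_algHom_apply (AdjoinRoot.mkₐ p) f Q
  have hnil : IsNilpotent (aeval (AdjoinRoot.mk p g) P - AdjoinRoot.mk p q) :=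
    ⟨m, by rwa [aeval_mk, ← map_sub, ← map_pow, AdjoinRoot.mk_eq_zero]⟩
  have hunit : IsUnit (aeval (AdjoinRoot.mk p g) (derivative P)) := by
    rw [aeval_mk, ← isCoprime_zero_left, ← AdjoinRoot.mk_self]
    exact hcop.map (AdjoinRoot.mk p)
  obtain ⟨r, hr⟩ := exists_aeval_eq_of_isNilpotent_sub hnil hunit
  obtain ⟨f, rfl⟩ := AdjoinRoot.mk_surjective r
  exact ⟨f, AdjoinRoot.mk_eq_mk.mp (by rw [← aeval_mk, hr])⟩

end Newton

section Splits

variable {K : Type*} [Field K] {p q : K[X]}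

theorem dvd_pow_card_roots_of_splits (hp0 : p ≠ 0) (hp : p.Splits)
    (h : ∀ z, p.IsRoot z → q.IsRoot z) : p ∣ q ^ p.roots.card := by
  have hprod : (p.roots.map (X - C ·)).prod ∣ (p.roots.map fun _ => q).prod :=
    Multiset.prod_dvd_prod_of_dvd _ _ fun z hz => dvd_iff_isRoot.mpr (h z (isRoot_of_mem_roots hz))
  rw [Multiset.map_const', Multiset.prod_replicate] at hprod
  nth_rw 1 [hp.eq_prod_roots]
  exact (C_mul_dvd (leadingCoeff_ne_zero.mpr hp0)).mpr hprod

theorem isCoprime_of_splits (hp0 : p ≠ 0) (hp : p.Splits)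
    (h : ∀ z, p.IsRoot z → ¬ q.IsRoot z) : IsCoprime p q := by
  refine isCoprime_of_irreducible_dvd (fun h0 => hp0 h0.1) fun r hr hrp hrq => ?_
  obtain ⟨z, hz⟩ := (hp.of_dvd hp0 hrp).exists_eval_eq_zero hr.degree_pos.ne'
  exact h z (IsRoot.dvd hz hrp) (IsRoot.dvd hz hrq)

theorem exists_dvd_comp_sub_of_splits {P : K[X]} (hp0 : p ≠ 0) (hp : p.Splits)
    (h : ∀ z, p.IsRoot z → ∃ s, P.eval s = q.eval z ∧ (derivative P).eval s ≠ 0) :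
    ∃ f, p ∣ P.comp f - q := by
  classical
  choose! s hs hs' using h
  let g : K[X] := Lagrange.interpolate p.roots.toFinset id s
  have hg (z : K) (hz : p.IsRoot z) : g.eval z = s z :=
    Lagrange.eval_interpolate_at_node (v := id) s Function.injective_id.injOn
      (Multiset.mem_toFinset.mpr ((mem_roots hp0).mpr hz))
  have hdvd : p ∣ (P.comp g - q) ^ p.roots.card :=
    dvd_pow_card_roots_of_splits hp0 hp fun z hz => by simp [hg z hz, hs z hz]
  have hcop : IsCoprime p ((derivative P).comp g) :=
    isCoprime_of_splits hp0 hp fun z hz => by simpa [hg z hz] using hs' z hz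
  exact exists_dvd_comp_sub_of_dvd_pow hdvd hcop

end Splits

section Algebra

variable {K A : Type*} [Field K] [Ring A] [Algebra K A] {a : A}

theorem isUnit_of_dvd_minpoly_of_isUnit_aeval (ha : IsIntegral K a) {q : K[X]}
    (hdvd : q ∣ minpoly K a) (hq : IsUnit (aeval a q)) : IsUnit q := by
  obtain ⟨r, hr⟩ := hdvd
  have hr_aeval : aeval a r = 0 := by
    rw [← hq.mul_right_eq_zero, ← map_mul, ← hr, minpoly.aeval]
  have hr0 : r ≠ 0 := right_ne_zero_of_mul (hr ▸ minpoly.ne_zero ha)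
  have hqr : q * r ∣ 1 * r := by simpa [← hr] using minpoly.dvd K a hr_aeval
  exact isUnit_of_dvd_one ((mul_dvd_mul_iff_right hr0).mp hqr)

theorem ne_zero_of_isRoot_minpoly_of_isUnit (ha : IsIntegral K a) (hu : IsUnit a) {z : K}
    (hz : (minpoly K a).IsRoot z) : z ≠ 0 := by
  rintro rfl
  refine not_isUnit_X (isUnit_of_dvd_minpoly_of_isUnit_aeval ha ?_ (by rwa [aeval_X]))
  simpa using dvd_iff_isRoot.mpr hz

theorem exists_aeval_aeval_eq_of_splits_minpoly {P : K[X]} (ha : IsIntegral K a)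
    (hsplits : (minpoly K a).Splits)
    (h : ∀ z, (minpoly K a).IsRoot z → ∃ s, P.eval s = z ∧ (derivative P).eval s ≠ 0) :
    ∃ f : K[X], aeval (aeval a f) P = a := by
  obtain ⟨f, hf⟩ := exists_dvd_comp_sub_of_splits (q := X) (minpoly.ne_zero ha) hsplits
    (by simpa using h)
  refine ⟨f, ?_⟩
  simpa [aeval_comp, sub_eq_zero] using aeval_eq_zero_of_dvd_aeval_eq_zero hf (minpoly.aeval K a)

theorem invertible_matrix_has_polynomial_sqrt_general {k : ℕ} (hk : (k : K) ≠ 0)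
    (ha : IsIntegral K a) (hu : IsUnit a) (hsplits : (minpoly K a).Splits)
    (hroots : ∀ z, (minpoly K a).IsRoot z → ∃ s, s ^ k = z) :
    ∃ f : K[X], aeval a f ^ k = a := by
  suffices ∃ f : K[X], aeval (aeval a f) (X ^ k : K[X]) = a by simpa using this
  refine exists_aeval_aeval_eq_of_splits_minpoly ha hsplits fun z hz => ?_
  obtain ⟨s, rfl⟩ := hroots z hz
  have hk0 : k ≠ 0 := by rintro rfl; exact hk Nat.cast_zero
  have hs : s ≠ 0 := (pow_ne_zero_iff hk0).mp (ne_zero_of_isRoot_minpoly_of_isUnit ha hu hz)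
  exact ⟨s, by simp, by simp [derivative_X_pow, hk, hs]⟩

end Algebra

/-- Every nonsingular complex matrix has a square root that is a polynomial in the
matrix: for invertible `M ∈ ℂ^{n×n}` there is `f ∈ ℂ[x]` with `f(M)² = M`. -/
theorem invertible_matrix_has_polynomial_sqrt (n : ℕ) (M : Matrix (Fin n) (Fin n) ℂ)
    (hM : IsUnit M) :
    ∃ f : Polynomial ℂ, (Polynomial.aeval M f) ^ 2 = M :=
  invertible_matrix_has_polynomial_sqrt_general (by norm_num) M.isIntegral hM
    (IsAlgClosed.splits _) fun z _ => IsAlgClosed.exists_pow_nat_eq z two_pos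
end
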